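/- Let K ∈ ps(C) and let s = min{t ∈ ℝ : K ∩ H(𝔳,t) ≠ ∅}. For every nonempty compact set ω ⊂ Ω_{C°}, with t_ω the number provided by the hyperplane lemma for s (satisfying t_ω ≤ c₁ s/Δ(ω) with c₁ depending only on C and 𝔳), the set M(K,ω) = ⋃_{x ∈ ν_K^{-1}(ω)} [o,x] satisfies M(K,ω) ⊂ C^-(t_ω); in particular ν_K^{-1}(ω) ⊂ C^-(t_ω). -/

import Mathlib

open MeasureTheory Set Filter
open scoped RealInnerProductSpace ENNReal Topology Pointwise NNReal

noncomputable section

abbrev En (n : ℕ) := EuclideanSpace ℝ (Fin n)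

/-- `C` is a pointed closed convex cone with nonempty interior. -/
def IsGoodCone (n : ℕ) (C : Set (En n)) : Prop :=
  IsClosed C ∧ Convex ℝ C ∧ (∀ x ∈ C, ∀ r : ℝ, 0 ≤ r → r • x ∈ C) ∧
    C ∩ (-C) = {0} ∧ (interior C).Nonempty

/-- The dual cone `C° = {x : ⟨x,y⟩ ≤ 0 ∀ y ∈ C}`. -/
def dualCone (n : ℕ) (C : Set (En n)) : Set (En n) := {x | ∀ y ∈ C, ⟪x, y⟫ ≤ 0}

/-- `Ω_C = S^{n-1} ∩ int C`. -/
def omegaC (n : ℕ) (C : Set (En n)) : Set (En n) := Metric.sphere 0 1 ∩ interior C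

/-- `Ω_{C°} = S^{n-1} ∩ int C°`. -/
def omegaDual (n : ℕ) (C : Set (En n)) : Set (En n) :=
  Metric.sphere 0 1 ∩ interior (dualCone n C)

/-- A pseudo-cone: nonempty closed convex set not containing `0` with `λK ⊆ K` for `λ ≥ 1`. -/
def IsPseudoCone (n : ℕ) (K : Set (En n)) : Prop :=
  K.Nonempty ∧ IsClosed K ∧ Convex ℝ K ∧ (0 : En n) ∉ K ∧ ∀ l : ℝ, 1 ≤ l → l • K ⊆ K

/-- The recession cone of `K`. -/
def recCone (n : ℕ) (K : Set (En n)) : Set (En n) :=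
  {z | ∀ x ∈ K, ∀ t : ℝ, 0 ≤ t → x + t • z ∈ K}

/-- A `C`-pseudo-cone: a pseudo-cone with recession cone `C`. -/
def IsCPseudoCone (n : ℕ) (C K : Set (En n)) : Prop := IsPseudoCone n K ∧ recCone n K = C

/-- The set of outer unit normal vectors of `K` at `x`. -/
def normalsAt (n : ℕ) (K : Set (En n)) (x : En n) : Set (En n) :=
  {u | ‖u‖ = 1 ∧ ∀ y ∈ K, ⟪y, u⟫ ≤ ⟪x, u⟫}

/-- `ν_K^{-1}(ω)`: the boundary points of `K` whose outer unit normal is unique and lies in `ω`. -/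
def nuInv (n : ℕ) (K ω : Set (En n)) : Set (En n) :=
  {x | x ∈ frontier K ∧ ∃ u ∈ ω, normalsAt n K x = {u}}

open Classical in
/-- The outer unit normal map `ν_K` (junk value `0` where the normal is not unique). -/
def nuMap (n : ℕ) (K : Set (En n)) (x : En n) : En n :=
  if h : ∃ u, normalsAt n K x = {u} then h.choose else 0

/-- `Δ(ω)`: the spherical (angular) distance of `ω` from the boundary of `Ω_{C°}`
(the relative boundary of `Ω_{C°}` in the unit sphere is `closure Ω_{C°} \ Ω_{C°}`,
since `Ω_{C°}` is relatively open in the sphere). -/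
def sphereAngleDist (n : ℕ) (C ω : Set (En n)) : ℝ :=
  sInf {d | ∃ u ∈ ω, ∃ v ∈ closure (omegaDual n C) \ omegaDual n C,
    d = InnerProductGeometry.angle u v}

/-- `b(K)`: the distance of `K` from the origin. -/
def distOrigin (n : ℕ) (K : Set (En n)) : ℝ := Metric.infDist 0 K

/-- `C^-(t) = C ∩ H^-(𝔳, t)`. -/
def Cminus (n : ℕ) (C : Set (En n)) (v : En n) (t : ℝ) : Set (En n) :=
  C ∩ {x | ⟪x, v⟫ ≤ t}

/-- The support function `h_K(u) = sup{⟨y,u⟩ : y ∈ K}`. -/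
def suppFn (n : ℕ) (K : Set (En n)) (u : En n) : ℝ := sSup ((fun y => ⟪y, u⟫) '' K)

/-- `Θ : C∖{0} → (0,∞)` continuous and homogeneous of degree `-q`. -/
def IsThetaWeight (n : ℕ) (C : Set (En n)) (q : ℝ) (Θ : En n → ℝ) : Prop :=
  ContinuousOn Θ (C \ {0}) ∧ (∀ y ∈ C \ {0}, 0 < Θ y) ∧
    ∀ y ∈ C \ {0}, ∀ r : ℝ, 0 < r → Θ (r • y) = r ^ (-q) * Θ y

/-- The `Θ`-weighted `n`-dimensional Hausdorff (Lebesgue) measure `H_Θ^n`. -/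
def HTheta (n : ℕ) (Θ : En n → ℝ) : Measure (En n) :=
  volume.withDensity fun y => ENNReal.ofReal (Θ y)

/-- The `Θ`-weighted cone-volume measure `V_K^Θ(ω) = H_Θ^n(⋃_{x ∈ ν_K^{-1}(ω)} [0,x])`. -/
def coneVol (n : ℕ) (Θ : En n → ℝ) (K ω : Set (En n)) : ℝ≥0∞ :=
  HTheta n Θ (⋃ x ∈ nuInv n K ω, segment ℝ (0 : En n) x)

/-- The (unweighted) cone-volume measure `V_K(ω) = H^n(⋃_{x ∈ ν_K^{-1}(ω)} [0,x])`. -/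
def coneVolU (n : ℕ) (K ω : Set (En n)) : ℝ≥0∞ :=
  volume (⋃ x ∈ nuInv n K ω, segment ℝ (0 : En n) x)

/-- The `Θ`-weighted surface area measure `S_{n-1}^Θ(K,ω) = ∫_{ν_K^{-1}(ω)} Θ dH^{n-1}`. -/
def surfTheta (n : ℕ) (Θ : En n → ℝ) (K ω : Set (En n)) : ℝ≥0∞ :=
  ∫⁻ x in nuInv n K ω, ENNReal.ofReal (Θ x) ∂(μH[(n : ℝ) - 1])

/-- `K ∈ K(C,ϖ)`: `K` is a `C`-pseudo-cone that is `C`-determined by `ϖ`. -/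
def CDetermined (n : ℕ) (C ϖ K : Set (En n)) : Prop :=
  IsCPseudoCone n C K ∧ K = C ∩ ⋂ u ∈ ϖ, {x | ⟪x, u⟫ ≤ suppFn n K u}

/-- The Wulff shape `[g] = C ∩ ⋂_{u ∈ ϖ} {y : ⟨y,u⟩ ≤ -g(u)}`. -/
def wulff (n : ℕ) (C ϖ : Set (En n)) (g : En n → ℝ) : Set (En n) :=
  C ∩ ⋂ u ∈ ϖ, {y | ⟪y, u⟫ ≤ -g u}

/-- The `Θ`-weighted covolume `V_Θ(K) = ∫_{C∖K} Θ dH^n`. -/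
def covol (n : ℕ) (Θ : En n → ℝ) (C K : Set (En n)) : ℝ≥0∞ := HTheta n Θ (C \ K)

/-- The radial function `ρ_K(v) = min{λ : λv ∈ K}`. -/
def rho (n : ℕ) (K : Set (En n)) (v : En n) : ℝ := sInf {t : ℝ | t • v ∈ K}

/-- The radial map `r_K(v) = ρ_K(v) v`. -/
def radMap (n : ℕ) (K : Set (En n)) (v : En n) : En n := rho n K v • v

/-- `α_K^{-1}(ω)`: directions `v ∈ Ω_C` with `r_K(v) ∈ ∂'K` (boundary point in `int C` with
unique outer normal) whose unique outer normal lies in `ω`. -/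
def alphaInv (n : ℕ) (C K ω : Set (En n)) : Set (En n) :=
  {v ∈ omegaC n C | radMap n K v ∈ frontier K ∧ radMap n K v ∈ interior C ∧
    ∃ u ∈ ω, normalsAt n K (radMap n K v) = {u}}

/-- `μ` is the Borel measure on `Ω_{C°}` representing the `Θ`-weighted cone-volume
measure of `K` (extended by `0` outside `Ω_{C°}`). -/
def RepsConeVol (n : ℕ) (C : Set (En n)) (Θ : En n → ℝ) (K : Set (En n))
    (μ : Measure (En n)) : Prop :=
  μ (omegaDual n C)ᶜ = 0 ∧
    ∀ ω, MeasurableSet ω → ω ⊆ omegaDual n C → μ ω = coneVol n Θ K ω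

/-- `μ` is the Borel measure on `Ω_{C°}` representing the `Θ`-weighted surface area
measure of `K` (extended by `0` outside `Ω_{C°}`). -/
def RepsSurf (n : ℕ) (C : Set (En n)) (Θ : En n → ℝ) (K : Set (En n))
    (μ : Measure (En n)) : Prop :=
  μ (omegaDual n C)ᶜ = 0 ∧
    ∀ ω, MeasurableSet ω → ω ⊆ omegaDual n C → μ ω = surfTheta n Θ K ω

/-- A `C`-pseudo-cone is contained in `C`. -/
theorem cPseudoCone_subset (n : ℕ) (C K : Set (En n)) (hK : IsCPseudoCone n C K) : K ⊆ C := by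
  obtain ⟨⟨-, hcl, hconv, -, hl⟩, hrec⟩ := hK
  intro x hx
  rw [← hrec]
  intro y hy t ht
  rcases ht.eq_or_lt with rfl | ht
  · simpa using hy
  have hlim : Tendsto (fun l : ℝ => (1 - l⁻¹) • y + t • x) atTop (𝓝 ((1 - (0 : ℝ)) • y + t • x)) :=
    ((tendsto_const_nhds.sub tendsto_inv_atTop_zero).smul_const y).add tendsto_const_nhds
  rw [sub_zero, one_smul] at hlim
  refine hcl.mem_of_tendsto hlim ?_
  filter_upwards [eventually_ge_atTop (1 : ℝ), eventually_ge_atTop t⁻¹] with l h1 h2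
  have hl0 : 0 < l := by linarith
  have hlt : 1 ≤ l * t := by
    have := mul_le_mul_of_nonneg_right h2 ht.le
    rwa [inv_mul_cancel₀ ht.ne'] at this
  have hm : (l * t) • x ∈ K := hl _ hlt (smul_mem_smul_set hx)
  have h := hconv hy hm (a := 1 - l⁻¹) (b := l⁻¹)
    (by have := inv_le_one_of_one_le₀ h1; linarith) (by positivity) (by ring)
  rwa [smul_smul, ← mul_assoc, inv_mul_cancel₀ hl0.ne', one_mul] at h

/-- Let `K ∈ ps(C)` and let `s` be the minimum of `{t : K ∩ H(𝔳,t) ≠ ∅}`.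
For every nonempty compact `ω ⊆ Ω_{C°}` and every `t_ω` with the property of the hyperplane
lemma for `s`, the set `M(K,ω) = ⋃_{x ∈ ν_K^{-1}(ω)} [0,x]` satisfies `M(K,ω) ⊆ C^-(t_ω)`;
in particular `ν_K^{-1}(ω) ⊆ C^-(t_ω)`. -/
theorem statement19 (n : ℕ) (hn : 2 ≤ n) (C : Set (En n)) (hC : IsGoodCone n C)
    (v : En n) (hv1 : ‖v‖ = 1) (hv2 : v ∈ interior C) (hv3 : -v ∈ interior (dualCone n C))
    (K : Set (En n)) (hK : IsCPseudoCone n C K)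
    (s : ℝ) (hs1 : (K ∩ {x | ⟪x, v⟫ = s}).Nonempty)
    (hs2 : ∀ t : ℝ, (K ∩ {x | ⟪x, v⟫ = t}).Nonempty → s ≤ t)
    (ω : Set (En n)) (hωne : ω.Nonempty) (hωc : IsCompact ω) (hωsub : ω ⊆ omegaDual n C)
    (tω : ℝ)
    (htω : ∀ u ∈ ω, ∀ τ : ℝ, ({x : En n | ⟪x, u⟫ = τ} ∩ Cminus n C v s).Nonempty →
      {x : En n | ⟪x, u⟫ = τ} ∩ C ⊆ Cminus n C v tω) :
    (⋃ x ∈ nuInv n K ω, segment ℝ (0 : En n) x) ⊆ Cminus n C v tω ∧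
      nuInv n K ω ⊆ Cminus n C v tω := by
  have hKC := cPseudoCone_subset n C K hK
  obtain ⟨-, hconv, hcone, -, -⟩ := hC
  have hvn : ∀ y ∈ C, 0 ≤ ⟪y, v⟫ := by
    intro y hy
    have := interior_subset hv3 y hy
    rw [inner_neg_left, real_inner_comm] at this
    linarith
  have key : nuInv n K ω ⊆ Cminus n C v tω := by
    rintro x ⟨hxf, u, hu, hun⟩
    have hxK : x ∈ K := hK.1.2.1.frontier_subset hxf
    obtain ⟨y, hyK, hys⟩ := hs1
    simp only [mem_setOf_eq] at hys
    have hmem : u ∈ normalsAt n K x := by rw [hun]; rfl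
    have hyx := hmem.2 y hyK
    have hx0 : ⟪x, u⟫ ≤ 0 := by
      rw [real_inner_comm]
      exact interior_subset (hωsub hu).2 x (hKC hxK)
    have hyv := hvn y (hKC hyK)
    refine htω u hu ⟪x, u⟫ ?_ ⟨rfl, hKC hxK⟩
    rcases eq_or_ne ⟪y, u⟫ 0 with h0 | h0
    · exact ⟨y, by simp only [mem_setOf_eq]; linarith, hKC hyK, hys.le⟩
    · have hneg : ⟪y, u⟫ < 0 := lt_of_le_of_ne (hyx.trans hx0) h0
      have hr0 : 0 ≤ ⟪x, u⟫ / ⟪y, u⟫ := div_nonneg_of_nonpos hx0 hneg.le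
      have hr1 : ⟪x, u⟫ / ⟪y, u⟫ ≤ 1 := (div_le_one_of_neg hneg).2 hyx
      refine ⟨(⟪x, u⟫ / ⟪y, u⟫) • y, ?_, hcone y (hKC hyK) _ hr0, ?_⟩
      · simp only [mem_setOf_eq, real_inner_smul_left]
        exact div_mul_cancel₀ _ h0
      · simp only [mem_setOf_eq, real_inner_smul_left]
        nlinarith
  refine ⟨?_, key⟩
  intro z hz
  simp only [mem_iUnion] at hz
  obtain ⟨x, hx, hz⟩ := hz
  obtain ⟨hxC, hxt⟩ := key hx
  simp only [mem_setOf_eq] at hxt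
  obtain ⟨a, b, ha, hb, hab, rfl⟩ := hz
  have hxv := hvn x hxC
  rw [smul_zero, zero_add]
  refine ⟨hcone x hxC b hb, ?_⟩
  simp only [mem_setOf_eq, real_inner_smul_left]
  nlinarith
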